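/- Let D ⊆ ℂ^m be a domain and let P, Q ∈ ℂ[z_1,…,z_m] be polynomials having no common non-constant polynomial factor (i.e. every common divisor of P and Q in ℂ[z_1,…,z_m] is a unit). Suppose f is holomorphic on D and f(z)·Q(z) = P(z) for every z ∈ D. Then Q(z) ≠ 0 for every z ∈ D. -/

import Mathlib

/-!
Where `Q` vanishes on `D`, so does `P = f Q`; hence it suffices to find, arbitrarily close to a
given zero `z` of `Q`, a zero of `Q` at which `P` does not vanish. One may replace `Q` by a prime
factor `q` with `q(z) = 0`, which does not divide `P`. Choose a direction `v` in which `q` is not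
identically zero on the line through `z`. Eliminating `T` between `q(X + T v)` and `P(X + T v)`
gives a nonzero polynomial `r(X)` that vanishes at `x` as soon as `q` and `P` have a common zero on
the line through `x` in direction `v`. By continuity of roots every such line with `x` near `z`
meets the zero set of `q` near `z`, so if `P` vanished at all zeros of `q` near `z`, then `r` would
vanish near `z` and thus be zero.
-/

open Filter MvPolynomial Topology
open scoped Polynomial

section Algebra

lemma exists_prime_dvd_of_map_eq_zero {M N F : Type*} [CommMonoidWithZero M]
    [UniqueFactorizationMonoid M] [CommMonoidWithZero N] [NoZeroDivisors N] [Nontrivial N]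
    [FunLike F M N] [MonoidHomClass F M N] (φ : F) {a : M} (ha : a ≠ 0) (hφ : φ a = 0) :
    ∃ p, Prime p ∧ p ∣ a ∧ φ p = 0 := by
  obtain ⟨s, hs, hsa⟩ := UniqueFactorizationMonoid.exists_prime_factors a ha
  have hprod : (s.map φ).prod = 0 := by
    rw [← map_multiset_prod, ← zero_dvd_iff, ← hφ]
    exact map_dvd φ hsa.symm.dvd
  obtain ⟨p, hp, hφp⟩ := Multiset.mem_map.1 (Multiset.prod_eq_zero_iff.1 hprod)
  exact ⟨p, hs p hp, (Multiset.dvd_prod hp).trans hsa.dvd, hφp⟩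

theorem exists_C_mem_span_pair_of_prime {A : Type*} [CommRing A] [IsDomain A] {q p : A[X]}
    (hq : Prime q) (hqp : ¬q ∣ p) : ∃ r ≠ 0, Polynomial.C r ∈ Ideal.span {q, p} := by
  have : IsDomain (AdjoinRoot q) := AdjoinRoot.isDomain_of_prime hq
  have hp : AdjoinRoot.mk q p ≠ 0 := mt AdjoinRoot.mk_eq_zero.1 hqp
  have halg : IsAlgebraic A (AdjoinRoot.mk q p) :=
    Algebra.isAlgebraic_adjoin_singleton_iff.2 (AdjoinRoot.isAlgebraic_root hq.ne_zero) _ <|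
      AdjoinRoot.adjoinRoot_eq_top (f := q) ▸ Algebra.mem_top
  obtain ⟨r, hr, hr0⟩ := Submodule.exists_mem_ne_zero_of_ne_bot <|
    Ideal.comap_ne_bot_of_algebraic_mem hp (Ideal.mem_span_singleton_self _) halg
  obtain ⟨b, hb⟩ := Ideal.mem_span_singleton.1 (Ideal.mem_comap.1 hr)
  obtain ⟨b, rfl⟩ := AdjoinRoot.mk_surjective b
  rw [AdjoinRoot.algebraMap_eq, ← AdjoinRoot.mk_C, ← map_mul, AdjoinRoot.mk_eq_mk] at hb
  obtain ⟨a, ha⟩ := hb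
  exact ⟨r, hr0, Ideal.mem_span_pair.2 ⟨a, b, by linear_combination -ha⟩⟩

variable {σ R : Type*} [CommRing R]

/-- The substitution `Xᵢ ↦ Xᵢ + vᵢ T`, `T ↦ T` in polynomials over `R` in the `Xᵢ` and a further
variable `T`. The image of a polynomial `q` in the `Xᵢ` is `q(X + T v)`, whose specialization at a
point `x` is the restriction of `q` to the line through `x` in direction `v`. -/
noncomputable def shear (v : σ → R) : (MvPolynomial σ R)[X] →ₐ[R] (MvPolynomial σ R)[X] :=
  Polynomial.aevalTower (aeval fun i ↦ .C (X i) + .C (C (v i)) * Polynomial.X) Polynomial.X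

lemma shear_C_X (v : σ → R) (i : σ) :
    shear v (.C (X i)) = .C (X i) + .C (C (v i)) * Polynomial.X := by
  rw [shear, Polynomial.aevalTower_C, aeval_X]

lemma shear_C_C (v : σ → R) (a : R) : shear v (.C (C a)) = .C (C a) := (shear v).commutes a

lemma shear_X (v : σ → R) : shear v Polynomial.X = Polynomial.X := Polynomial.aevalTower_X _ _

lemma shear_comp_shear {u v : σ → R} (huv : u + v = 0) : (shear u).comp (shear v) = .id R _ := by
  refine Polynomial.algHom_ext' (MvPolynomial.algHom_ext fun i ↦ ?_) (by simp [shear_X])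
  have hv : v i = -u i := eq_neg_of_add_eq_zero_right (congrFun huv i)
  calc shear u (shear v (.C (X i)))
      = .C (X i) + .C (C (u i)) * Polynomial.X + .C (C (v i)) * Polynomial.X := by
        simp [shear_C_X, shear_C_C, shear_X]
    _ = .C (X i) := by rw [hv, C_neg, Polynomial.C_neg]; ring

lemma shear_bijective (v : σ → R) : Function.Bijective (shear v) :=
  (AlgEquiv.ofAlgHom _ _ (shear_comp_shear (add_neg_cancel v))
    (shear_comp_shear (neg_add_cancel v))).bijective

lemma eval_map_shear_C (v x : σ → R) (t : R) (q : MvPolynomial σ R) :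
    ((shear v (.C q)).map (eval x)).eval t = eval (x + t • v) q := by
  induction q using MvPolynomial.induction_on with
  | C a => simp [shear_C_C]
  | add p q hp hq => simp [hp, hq]
  | mul_X p i hp => simp [hp, shear_C_X, mul_comm t]

theorem exists_ne_zero_eval_eq_zero_of_common_zero_on_line [IsDomain R] {q p : MvPolynomial σ R}
    (hq : Prime q) (hqp : ¬q ∣ p) (v : σ → R) :
    ∃ r : MvPolynomial σ R, r ≠ 0 ∧ ∀ (x : σ → R) (t : R),
      eval (x + t • v) q = 0 → eval (x + t • v) p = 0 → eval x r = 0 := by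
  let e : (MvPolynomial σ R)[X] ≃ₐ[R] (MvPolynomial σ R)[X] := .ofBijective _ (shear_bijective v)
  have hprime : Prime (e (.C q)) := (MulEquiv.prime_iff e).2 (Polynomial.prime_C_iff.2 hq)
  have hndvd : ¬e (.C q) ∣ e (.C p) := fun h ↦ hqp <| by
    simpa using (Polynomial.C_dvd_iff_dvd_coeff q _).1 ((map_dvd_iff e).1 h) 0
  obtain ⟨r, hr, hmem⟩ := exists_C_mem_span_pair_of_prime hprime hndvd
  obtain ⟨a, b, hab⟩ := Ideal.mem_span_pair.1 hmem
  refine ⟨r, hr, fun x t hqx hpx ↦ ?_⟩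
  have heval := congrArg (fun g ↦ (g.map (eval x)).eval t) hab
  simpa [e, eval_map_shear_C, hqx, hpx] using heval.symm

end Algebra

lemma norm_eval_le_of_splits_of_forall_isRoot {K : Type*} [NormedField K] {p : K[X]} (hp : p.Splits)
    {ε : ℝ} (hε : 0 < ε) {a : K} (hroot : ∀ t, p.IsRoot t → ε ≤ ‖a - t‖) (b : K) :
    ‖p.eval b‖ ≤ (1 + ‖b - a‖ / ε) ^ p.natDegree * ‖p.eval a‖ := by
  have hfactor : ∀ t ∈ p.roots, ‖b - t‖ ≤ (1 + ‖b - a‖ / ε) * ‖a - t‖ := by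
    intro t ht
    have hat : ε ≤ ‖a - t‖ := hroot t (Polynomial.isRoot_of_mem_roots ht)
    calc ‖b - t‖ ≤ ‖a - t‖ + ‖b - a‖ := by rw [add_comm]; exact norm_sub_le_norm_sub_add_norm_sub ..
      _ = ‖a - t‖ + ‖b - a‖ / ε * ε := by rw [div_mul_cancel₀ _ hε.ne']
      _ ≤ ‖a - t‖ + ‖b - a‖ / ε * ‖a - t‖ := by gcongr
      _ = (1 + ‖b - a‖ / ε) * ‖a - t‖ := by ring
  have hnorm (x : K) : ‖p.eval x‖ = ‖p.leadingCoeff‖ * (p.roots.map fun t ↦ ‖x - t‖).prod := by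
    rw [hp.eval_eq_prod_roots, norm_mul]
    congr 1
    simpa using map_multiset_prod (normHom : K →*₀ ℝ) (p.roots.map (x - ·))
  calc ‖p.eval b‖ = ‖p.leadingCoeff‖ * (p.roots.map fun t ↦ ‖b - t‖).prod := hnorm b
    _ ≤ ‖p.leadingCoeff‖ * (p.roots.map fun t ↦ (1 + ‖b - a‖ / ε) * ‖a - t‖).prod := by
      gcongr
      exact Multiset.prod_map_le_prod_map₀ _ _ (fun _ _ ↦ norm_nonneg _) hfactor
    _ = (1 + ‖b - a‖ / ε) ^ p.natDegree * ‖p.eval a‖ := by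
      rw [Multiset.prod_map_mul, Multiset.map_const', Multiset.prod_replicate,
        ← hp.natDegree_eq_card_roots, hnorm a]
      ring

section NormedField

variable {σ K : Type*} [NontriviallyNormedField K]

lemma eq_zero_of_eventually_eval_eq_zero {p : MvPolynomial σ K} {z : σ → K}
    (h : ∀ᶠ x in 𝓝 z, eval x p = 0) : p = 0 := by
  rw [nhds_pi] at h
  obtain ⟨I, -, s, hs, hsub⟩ := Filter.mem_pi.1 h
  refine funext_set s (fun i ↦ infinite_of_mem_nhds (z i) (hs i)) fun x hx ↦ ?_
  simpa using hsub fun i _ ↦ hx i trivial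

variable [IsAlgClosed K]

theorem eventually_exists_small_zero_on_line {q : MvPolynomial σ K} {z v : σ → K}
    (hz : eval z q = 0) (hv : eval (z + v) q ≠ 0) {ε : ℝ} (hε : 0 < ε) :
    ∀ᶠ x in 𝓝 z, ∃ t : K, ‖t‖ < ε ∧ eval (x + t • v) q = 0 := by
  -- The degree of `q (x + T • v)` in `T` may drop at `x = z`, so the size of `q x` is compared with
  -- that of the value at `T = 1` and not with the leading coefficient.
  set N := (shear v (.C q)).natDegree
  have hcont (w : σ → K) : Continuous fun x ↦ ‖eval (x + w) q‖ :=
    ((continuous_eval q).comp (by fun_prop)).norm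
  have hlt : ∀ᶠ x in 𝓝 z, (1 + 1 / ε) ^ N * ‖eval (x + 0) q‖ < ‖eval (x + v) q‖ := by
    refine ((hcont 0).const_mul _).continuousAt.eventually_lt (hcont v).continuousAt ?_
    simpa [hz] using hv
  filter_upwards [hlt] with x hx
  by_contra! hroot
  set p := (shear v (.C q)).map (eval x)
  have hdeg : p.natDegree ≤ N := Polynomial.natDegree_map_le
  have hp (t : K) : p.eval t = eval (x + t • v) q := eval_map_shear_C v x t q
  have hbound : ‖p.eval 1‖ ≤ (1 + ‖(1 : K) - 0‖ / ε) ^ p.natDegree * ‖p.eval 0‖ := by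
    refine norm_eval_le_of_splits_of_forall_isRoot (IsAlgClosed.splits p) hε (fun t ht ↦ ?_) 1
    rw [zero_sub, norm_neg]
    by_contra! htε
    exact hroot t htε (hp t ▸ ht)
  rw [hp, hp, sub_zero, norm_one, one_smul, zero_smul] at hbound
  refine hx.not_ge (hbound.trans ?_)
  gcongr
  simpa using hε.le

theorem frequently_eval_eq_zero_and_ne_zero_of_prime {q p : MvPolynomial σ K}
    (hq : Prime q) (hqp : ¬q ∣ p) {z : σ → K} (hz : eval z q = 0) :
    ∃ᶠ w in 𝓝 z, eval w q = 0 ∧ eval w p ≠ 0 := by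
  by_contra hfreq
  have hnear : ∀ᶠ w in 𝓝 z, eval w q = 0 → eval w p = 0 := by
    simpa only [not_frequently, not_and_not_right] using hfreq
  obtain ⟨v, hv⟩ : ∃ v, eval (z + v) q ≠ 0 := by
    by_contra! hzero
    exact hq.ne_zero (MvPolynomial.funext fun w ↦ by simpa using hzero (w - z))
  obtain ⟨r, hr, hline⟩ := exists_ne_zero_eval_eq_zero_of_common_zero_on_line hq hqp v
  have hadd : Tendsto (fun y : (σ → K) × K ↦ y.1 + y.2 • v) (𝓝 z ×ˢ 𝓝 0) (𝓝 z) := by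
    rw [← nhds_prod_eq]
    exact Continuous.tendsto' (by fun_prop) _ _ (by simp)
  obtain ⟨S, hS, B, hB, hSB⟩ := eventually_prod_iff.1 (hadd.eventually hnear)
  obtain ⟨ε, hε, hball⟩ := Metric.eventually_nhds_iff.1 hB
  refine hr (eq_zero_of_eventually_eval_eq_zero (z := z) ?_)
  filter_upwards [hS, eventually_exists_small_zero_on_line hz hv hε] with x hxS ⟨t, ht, hqx⟩
  have htB : B t := hball (by rwa [dist_zero_right])
  exact hline x t hqx (hSB hxS htB hqx)

theorem frequently_eval_eq_zero_and_ne_zero_of_isRelPrime {P Q : MvPolynomial σ K}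
    (hPQ : IsRelPrime P Q) {z : σ → K} (hz : eval z Q = 0) :
    ∃ᶠ w in 𝓝 z, eval w Q = 0 ∧ eval w P ≠ 0 := by
  obtain rfl | hQ := eq_or_ne Q 0
  · exact .of_forall fun w ↦ ⟨map_zero _, ((isRelPrime_zero_right.1 hPQ).map (eval w)).ne_zero⟩
  obtain ⟨q, hq, hqQ, hqz⟩ := exists_prime_dvd_of_map_eq_zero (eval z) hQ hz
  have hqP : ¬q ∣ P := fun h ↦ hq.not_isUnit (hPQ h hqQ)
  exact (frequently_eval_eq_zero_and_ne_zero_of_prime hq hqP hqz).mono fun w ⟨hqw, hPw⟩ ↦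
    ⟨zero_dvd_iff.1 (hqw ▸ map_dvd (eval w) hqQ), hPw⟩

theorem denominator_nonvanishing_general {D : Set (σ → K)} (hD : IsOpen D) {P Q : MvPolynomial σ K}
    (hPQ : IsRelPrime P Q) {f : (σ → K) → K} (hf : ∀ z ∈ D, f z * eval z Q = eval z P) :
    ∀ z ∈ D, eval z Q ≠ 0 := by
  intro z hz hQz
  have hfreq := frequently_eval_eq_zero_and_ne_zero_of_isRelPrime hPQ hQz
  obtain ⟨w, ⟨hQw, hPw⟩, hw⟩ := (hfreq.and_eventually (hD.mem_nhds hz)).exists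
  exact hPw (by rw [← hf w hw, hQw, mul_zero])

end NormedField

/-- If `P, Q ∈ ℂ[z_1,…,z_m]` have no common non-constant factor, `f` is holomorphic on a
domain `D ⊆ ℂ^m`, and `f·Q = P` on `D`, then `Q` has no zeros in `D`. -/
theorem denominator_nonvanishing (m : ℕ)
    (D : Set (Fin m → ℂ)) (hDo : IsOpen D) (hDc : IsConnected D)
    (P Q : MvPolynomial (Fin m) ℂ)
    (hcop : ∀ R : MvPolynomial (Fin m) ℂ, R ∣ P → R ∣ Q → IsUnit R)
    (f : (Fin m → ℂ) → ℂ) (hf : DifferentiableOn ℂ f D)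
    (heq : ∀ z ∈ D, f z * MvPolynomial.eval z Q = MvPolynomial.eval z P) :
    ∀ z ∈ D, MvPolynomial.eval z Q ≠ 0 :=
  denominator_nonvanishing_general hDo (fun _ ↦ hcop _) heq
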